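/- Let G be a finite group, X a finite G-set with permutation representation ℝ^X, and x ∈ X with stabilizer G_x. Let V_0, …, V_d be permutation representations of G with V_d = ℝ^X, and M_i ⊆ Aff_G(V_{i-1}, V_i) layer spaces for i = 1, …, d. Let M ⊆ Aff_G(ℝ^X, ℝ^X) be a layer space containing the identity map, let P := { π_x ∘ f : f ∈ M } ⊆ Aff_{G_x}(ℝ^X, ℝ) be the pushforward layer space, and let L := Aff(ℝ, ℝ). Assume σ : ℝ → ℝ is continuous and not a polynomial, and set ρ = ρ(U(M_1, …, M_d, P)). Then U(M_1, …, M_d, P, L) = C_ρ(V_0, ℝ). -/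

import Mathlib

open scoped BigOperators

noncomputable section EquivUnivPreamble

/-- Point-wise activation: apply `σ` coordinatewise. -/
def act (σ : ℝ → ℝ) {Z : Type} (v : Z → ℝ) : Z → ℝ := fun z => σ (v z)

/-- The action of a group element `g` on a real-valued function `v : Y → ℝ` induced by a
`G`-action on `Y` (the permutation representation `ℝ^Y`): `(g • v) y = v (g⁻¹ • y)`. -/
def pSMul {G Y : Type} [Group G] [MulAction G Y] (g : G) (v : Y → ℝ) : Y → ℝ :=
  fun y => v (g⁻¹ • y)

/-- `G`-equivariance of a map between permutation representations. -/
def Equivariant (G : Type) [Group G] {Y Z : Type} [MulAction G Y] [MulAction G Z]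
    (f : (Y → ℝ) → (Z → ℝ)) : Prop :=
  ∀ (g : G) (v : Y → ℝ), f (pSMul g v) = pSMul g (f v)

/-- A map between permutation representations is affine. -/
def IsAffine {Y Z : Type} (f : (Y → ℝ) → (Z → ℝ)) : Prop :=
  ∃ (φ : (Y → ℝ) →ₗ[ℝ] (Z → ℝ)) (b : Z → ℝ), ∀ v, f v = φ v + b

/-- A layer space: the set of maps `v ↦ ∑ᵢ cᵢ φⁱ(v) + b` where `φ¹, …, φᵏ` are fixed
`G`-equivariant linear maps and the bias `b` ranges over all functions constant on
`G`-orbits (i.e. all `∑ⱼ yⱼ 1_{Xⱼ}` with `Xⱼ` the orbits). -/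
def IsLayerSpace (G : Type) [Group G] {Y Z : Type} [MulAction G Y] [MulAction G Z]
    (M : Set ((Y → ℝ) → (Z → ℝ))) : Prop :=
  ∃ (k : ℕ) (φ : Fin k → ((Y → ℝ) →ₗ[ℝ] (Z → ℝ))),
    (∀ i, Equivariant G (φ i : (Y → ℝ) → (Z → ℝ))) ∧
    M = { f | ∃ (c : Fin k → ℝ) (b : Z → ℝ),
            (∀ (g : G) (z : Z), b (g • z) = b z) ∧
            ∀ v, f v = (∑ i, c i • φ i v) + b }

/-- `M^{k×h}`: the layer space `M` with input multiplicity `k` and output multiplicity `h`,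
`(v₁,…,v_k) ↦ (∑ⱼ f_{1,j}(vⱼ), …, ∑ⱼ f_{h,j}(vⱼ))`, identifying `V ⊗ ℝᵏ` with
`Fin k × Y → ℝ`. -/
def layerPow {Y Z : Type} (M : Set ((Y → ℝ) → (Z → ℝ))) (k h : ℕ) :
    Set ((Fin k × Y → ℝ) → (Fin h × Z → ℝ)) :=
  { F | ∃ f : Fin h → Fin k → ((Y → ℝ) → (Z → ℝ)),
      (∀ i j, f i j ∈ M) ∧
      ∀ (v : Fin k × Y → ℝ) (p : Fin h × Z), F v p = ∑ j, f p.1 j (fun y => v (j, y)) p.2 }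

/-- `M^{1×h}` under the canonical identification `V ⊗ ℝ¹ ≅ V` of the input. -/
def layerPowIn {Y Z : Type} (M : Set ((Y → ℝ) → (Z → ℝ))) (h : ℕ) :
    Set ((Y → ℝ) → (Fin h × Z → ℝ)) :=
  { F | ∃ f : Fin h → ((Y → ℝ) → (Z → ℝ)), (∀ i, f i ∈ M) ∧
      ∀ (v : Y → ℝ) (p : Fin h × Z), F v p = f p.1 v p.2 }

/-- `M^{k×1}` under the canonical identification `W ⊗ ℝ¹ ≅ W` of the output. -/
def layerPowOut {Y Z : Type} (M : Set ((Y → ℝ) → (Z → ℝ))) (k : ℕ) :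
    Set ((Fin k × Y → ℝ) → (Z → ℝ)) :=
  { F | ∃ f : Fin k → ((Y → ℝ) → (Z → ℝ)), (∀ j, f j ∈ M) ∧
      ∀ (v : Fin k × Y → ℝ) (z : Z), F v z = ∑ j, f j (fun y => v (j, y)) z }

/-- Evaluation of a chain of `d+1` layers with the point-wise activation `σ` between
consecutive layers: `φ_d ∘ σ̃ ∘ ⋯ ∘ σ̃ ∘ φ_0`. -/
def chainEval (σ : ℝ → ℝ) : ∀ (d : ℕ) (Y : Fin (d + 2) → Type)
    (φ : ∀ i : Fin (d + 1), (Y i.castSucc → ℝ) → (Y i.succ → ℝ)),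
    (Y 0 → ℝ) → (Y (Fin.last (d + 1)) → ℝ)
  | 0, _, φ => φ 0
  | (d + 1), Y, φ => fun v =>
      φ (Fin.last (d + 1))
        (act σ (chainEval σ d (fun i : Fin (d + 2) => Y i.castSucc)
          (fun i : Fin (d + 1) => φ i.castSucc) v))

/-- The neural space `N(M₀, …, M_d)` of a chain of `d+1` layer spaces. -/
def NeuralSpace (σ : ℝ → ℝ) (d : ℕ) (Y : Fin (d + 2) → Type)
    (M : ∀ i : Fin (d + 1), Set ((Y i.castSucc → ℝ) → (Y i.succ → ℝ))) :
    Set ((Y 0 → ℝ) → (Y (Fin.last (d + 1)) → ℝ)) :=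
  { F | ∃ φ : ∀ i : Fin (d + 1), (Y i.castSucc → ℝ) → (Y i.succ → ℝ),
      (∀ i, φ i ∈ M i) ∧ F = chainEval σ d Y φ }

/-- All networks `N(M₀^{1×k₁}, M₁^{k₁×k₂}, …, M_d^{k_d×k})` for the chain `M₀,…,M_d`, with
arbitrary interior multiplicities and fixed output multiplicity `k` (union over the interior
multiplicities). -/
def WPre (σ : ℝ → ℝ) : ∀ (d : ℕ) (Y : Fin (d + 2) → Type)
    (M : ∀ i : Fin (d + 1), Set ((Y i.castSucc → ℝ) → (Y i.succ → ℝ))) (k : ℕ),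
    Set ((Y 0 → ℝ) → (Fin k × Y (Fin.last (d + 1)) → ℝ))
  | 0, _, M, k => layerPowIn (M 0) k
  | (d + 1), Y, M, k =>
      { F | ∃ (k' : ℕ) (g : (Y 0 → ℝ) → (Fin k' × Y (Fin.last (d + 1)).castSucc → ℝ)),
          g ∈ WPre σ d (fun i : Fin (d + 2) => Y i.castSucc)
                (fun i : Fin (d + 1) => M i.castSucc) k' ∧
          ∃ f ∈ layerPow (M (Fin.last (d + 1))) k' k,
          F = fun v => f (act σ (g v)) }

/-- The network space `N(M₀^{1×k}, M₁^{k×k}, …, M_d^{k×k})`: all multiplicities equal to `k`. -/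
def WFix (σ : ℝ → ℝ) : ∀ (d : ℕ) (Y : Fin (d + 2) → Type)
    (M : ∀ i : Fin (d + 1), Set ((Y i.castSucc → ℝ) → (Y i.succ → ℝ))) (k : ℕ),
    Set ((Y 0 → ℝ) → (Fin k × Y (Fin.last (d + 1)) → ℝ))
  | 0, _, M, k => layerPowIn (M 0) k
  | (d + 1), Y, M, k =>
      { F | ∃ g ∈ WFix σ d (fun i : Fin (d + 2) => Y i.castSucc)
                (fun i : Fin (d + 1) => M i.castSucc) k,
          ∃ f ∈ layerPow (M (Fin.last (d + 1))) k k,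
          F = fun v => f (act σ (g v)) }

/-- Closure in the topology of uniform convergence on compact sets. -/
def UnifClosure {A B : Type} [TopologicalSpace A] [PseudoMetricSpace B]
    (S : Set (A → B)) : Set (A → B) :=
  { F | ∀ K : Set A, IsCompact K → ∀ ε : ℝ, 0 < ε → ∃ g ∈ S, ∀ x ∈ K, dist (F x) (g x) < ε }

/-- Separation relation of a family of functions. -/
def sepRel {A B : Type} (S : Set (A → B)) : Set (A × A) :=
  { p | ∀ f ∈ S, f p.1 = f p.2 }

/-- Entry-wise separation relation at the output entry `z`. -/
def sepRelAt {A Z : Type} (S : Set (A → (Z → ℝ))) (z : Z) : Set (A × A) :=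
  { p | ∀ f ∈ S, f p.1 z = f p.2 z }

/-- `C_ρ(A, B)`: continuous functions respecting the relation `ρ`. -/
def Crho {A B : Type} [TopologicalSpace A] [TopologicalSpace B] (ρ : Set (A × A)) :
    Set (A → B) :=
  { f | Continuous f ∧ ∀ p ∈ ρ, f p.1 = f p.2 }

/-- `C_ρ̄(A, ℝ^Z)` for a family of entry-wise relations `ρ̄ = (ρ_z)_{z ∈ Z}`. -/
def CrhoEntryRel {A Z : Type} [TopologicalSpace A] (ρ : Z → Set (A × A)) :
    Set (A → (Z → ℝ)) :=
  { f | Continuous f ∧ ∀ (z : Z), ∀ p ∈ ρ z, f p.1 z = f p.2 z }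

/-- `σ` is not a polynomial function. -/
def NotPolynomial (σ : ℝ → ℝ) : Prop :=
  ¬ ∃ p : Polynomial ℝ, ∀ x : ℝ, σ x = Polynomial.eval x p

/-- `c+1` widened copies of the layer space `M ⊆ Aff_G(ℝ^Z, ℝ^Z)`, from input multiplicity
`kin` to output multiplicity `kout` (union over interior multiplicities). -/
def WRep (σ : ℝ → ℝ) {Z : Type} (M : Set ((Z → ℝ) → (Z → ℝ))) :
    ∀ (_c kin kout : ℕ), Set ((Fin kin × Z → ℝ) → (Fin kout × Z → ℝ))
  | 0, kin, kout => layerPow M kin kout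
  | (c + 1), kin, kout =>
      { F | ∃ k, ∃ g ∈ WRep σ M c kin k, ∃ f ∈ layerPow M k kout,
          F = fun v => f (act σ (g v)) }

/-- `c+1` widened copies of `M`, starting at input multiplicity `kin` and ending with
output multiplicity `1` (canonically identified with `ℝ^Z`). -/
def WRepOut (σ : ℝ → ℝ) {Z : Type} (M : Set ((Z → ℝ) → (Z → ℝ))) :
    ∀ (_c kin : ℕ), Set ((Fin kin × Z → ℝ) → (Z → ℝ))
  | 0, kin => layerPowOut M kin
  | (c + 1), kin =>
      { F | ∃ k, ∃ g ∈ WRep σ M c kin k, ∃ f ∈ layerPowOut M k,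
          F = fun v => f (act σ (g v)) }

/-- `c+1` widened copies of `M`, with input multiplicity `1` (identified with `ℝ^Z`) and
output multiplicity `k`. -/
def WRepIn (σ : ℝ → ℝ) {Z : Type} (M : Set ((Z → ℝ) → (Z → ℝ))) :
    ∀ (_c k : ℕ), Set ((Z → ℝ) → (Fin k × Z → ℝ))
  | 0, k => layerPowIn M k
  | (c + 1), k =>
      { F | ∃ k', ∃ g ∈ WRepIn σ M c k', ∃ f ∈ layerPow M k' k,
          F = fun v => f (act σ (g v)) }

/-- The universality class `U(M, …, M)` of `c+2` copies of a layer space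
`M ⊆ Aff_G(ℝ^Z, ℝ^Z)`. -/
def UClassRep (σ : ℝ → ℝ) {Z : Type} [Fintype Z] (M : Set ((Z → ℝ) → (Z → ℝ))) (c : ℕ) :
    Set ((Z → ℝ) → (Z → ℝ)) :=
  UnifClosure { F | ∃ k, ∃ g ∈ WRepIn σ M c k, ∃ f ∈ layerPowOut M k,
      F = fun v => f (act σ (g v)) }

/-- The universality class `U(M₀, …, M_d, M, …, M)` of the chain `M₀, …, M_d` followed by
`c+1` copies of `M`. -/
def UClassPreRep (σ : ℝ → ℝ) (d : ℕ) (Y : Fin (d + 2) → Type)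
    [Fintype (Y (Fin.last (d + 1)))]
    (Mpre : ∀ i : Fin (d + 1), Set ((Y i.castSucc → ℝ) → (Y i.succ → ℝ)))
    (M : Set ((Y (Fin.last (d + 1)) → ℝ) → (Y (Fin.last (d + 1)) → ℝ))) (c : ℕ) :
    Set ((Y 0 → ℝ) → (Y (Fin.last (d + 1)) → ℝ)) :=
  UnifClosure { F | ∃ k, ∃ g ∈ WPre σ d Y Mpre k, ∃ f ∈ WRepOut σ M c k,
      F = fun v => f (act σ (g v)) }

/-- The universality class `U(M₀, …, M_d, N)` of the chain `M₀, …, M_d` followed by one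
extra layer space `N`. -/
def UClassApp1 (σ : ℝ → ℝ) (d : ℕ) (Y : Fin (d + 2) → Type)
    (M : ∀ i : Fin (d + 1), Set ((Y i.castSucc → ℝ) → (Y i.succ → ℝ)))
    {Z : Type} [Fintype Z]
    (N : Set ((Y (Fin.last (d + 1)) → ℝ) → (Z → ℝ))) : Set ((Y 0 → ℝ) → (Z → ℝ)) :=
  UnifClosure { F | ∃ k, ∃ g ∈ WPre σ d Y M k, ∃ f ∈ layerPowOut N k,
      F = fun v => f (act σ (g v)) }

/-- The universality class `U(M₀, …, M_d, N₁, N₂)` of the chain `M₀, …, M_d` followed by two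
extra layer spaces `N₁, N₂`. -/
def UClassApp2 (σ : ℝ → ℝ) (d : ℕ) (Y : Fin (d + 2) → Type)
    (M : ∀ i : Fin (d + 1), Set ((Y i.castSucc → ℝ) → (Y i.succ → ℝ)))
    {Z₁ Z₂ : Type} [Fintype Z₂]
    (N₁ : Set ((Y (Fin.last (d + 1)) → ℝ) → (Z₁ → ℝ)))
    (N₂ : Set ((Z₁ → ℝ) → (Z₂ → ℝ))) : Set ((Y 0 → ℝ) → (Z₂ → ℝ)) :=
  UnifClosure { F | ∃ k₁, ∃ g ∈ WPre σ d Y M k₁, ∃ k₂, ∃ m ∈ layerPow N₁ k₁ k₂,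
      ∃ f ∈ layerPowOut N₂ k₂, F = fun v => f (act σ (m (act σ (g v)))) }

/-- The universality class `U(M₁, M₂, M₃)` of three layer spaces on a common space `ℝ^Z`. -/
def UClass3 (σ : ℝ → ℝ) {Z : Type} [Fintype Z] (M₁ M₂ M₃ : Set ((Z → ℝ) → (Z → ℝ))) :
    Set ((Z → ℝ) → (Z → ℝ)) :=
  UnifClosure { F | ∃ k₁ k₂, ∃ g ∈ layerPowIn M₁ k₁, ∃ m ∈ layerPow M₂ k₁ k₂,
      ∃ f ∈ layerPowOut M₃ k₂, F = fun v => f (act σ (m (act σ (g v)))) }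

/-- The invariant layer space `I = Aff_G(ℝ^Y, ℝ)`: all `G`-invariant affine maps, with `ℝ`
realized as the trivial permutation representation `ℝ^{Unit}`. -/
def InvAff (G : Type) [Group G] {Y : Type} [MulAction G Y] :
    Set ((Y → ℝ) → (Unit → ℝ)) :=
  { f | IsAffine f ∧ ∀ (g : G) (v : Y → ℝ), f (pSMul g v) = f v }

/-- The fully connected layer space `L = Aff(ℝ, ℝ)`, with `ℝ` realized as `ℝ^{Unit}`. -/
def Lfull : Set ((Unit → ℝ) → (Unit → ℝ)) :=
  { f | ∃ a b : ℝ, f = fun v _ => a * v () + b }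

/-- The width-1 convolutional layer space `C ⊆ Aff_G(ℝ^X, ℝ^X)`:
`v ↦ a·v + (bias constant on `G`-orbits)`, i.e. `v ↦ a·v + ∑ⱼ yⱼ 1_{Xⱼ}`. -/
def ConvG (G : Type) [Group G] {X : Type} [MulAction G X] : Set ((X → ℝ) → (X → ℝ)) :=
  { f | ∃ (a : ℝ) (b : X → ℝ), (∀ (g : G) (z : X), b (g • z) = b z) ∧
      f = fun v z => a * v z + b z }

/-- The width-1 convolutional layer space for `S_n` acting on `ℝ^n`:
`C = { v ↦ a·v + b𝟙 }`. -/
def ConvC (n : ℕ) : Set ((Fin n → ℝ) → (Fin n → ℝ)) :=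
  { f | ∃ a b : ℝ, f = fun v i => a * v i + b }

/-- The PointNet (DeepSets) layer space for `S_n` acting on `ℝ^n`:
`P = { v ↦ (a·Id + c·𝟙𝟙ᵀ) v + b𝟙 }`. -/
def PointNetP (n : ℕ) : Set ((Fin n → ℝ) → (Fin n → ℝ)) :=
  { f | ∃ a c b : ℝ, f = fun v i => a * v i + c * (∑ j, v j) + b }
end EquivUnivPreamble

open Polynomial in
theorem exists_polynomial_of_iteratedDeriv_eq_zero (n : ℕ) :
    ∀ τ : ℝ → ℝ, ContDiff ℝ (⊤ : ℕ∞) τ → (∀ x, iteratedDeriv n τ x = 0) →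
      ∃ p : ℝ[X], p.degree < n ∧ ∀ x, τ x = p.eval x := by
  induction n with
  | zero =>
    intro τ _ h
    exact ⟨0, by simp, fun x => by simpa using h x⟩
  | succ n ih =>
    intro τ hτ h
    obtain ⟨q, hq, hqe⟩ := ih (deriv τ) (by
      have h' : ContDiff ℝ ((⊤ : ℕ∞) + 1) τ := hτ
      exact (contDiff_succ_iff_deriv.1 h').2.2) (fun x => by
        rw [← iteratedDeriv_succ']; exact h x)
    let P : ℝ[X] := ∑ i ∈ Finset.range n, monomial (i + 1) (q.coeff i / (i + 1))
    have hP : ∀ x, (derivative P).eval x = q.eval x := by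
      intro x
      have hd : derivative P = q := by
        ext k
        simp only [P, derivative_sum, derivative_monomial, finsetSum_coeff, coeff_monomial]
        simp only [Nat.add_sub_cancel]
        rw [Finset.sum_ite_eq' (Finset.range n) k]
        split_ifs with hk
        · push_cast
          field_simp
        · symm
          apply coeff_eq_zero_of_degree_lt
          refine hq.trans_le ?_
          simpa using hk
      rw [hd]
    have hdiff : Differentiable ℝ τ := hτ.differentiable (by simp)
    have hc : ∀ x, τ x - P.eval x = τ 0 - P.eval 0 := by
      intro x
      refine is_const_of_deriv_eq_zero (f := fun x => τ x - P.eval x)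
        (hdiff.sub P.differentiable) (fun y => ?_) x 0
      have := (hdiff y).hasDerivAt.sub (P.hasDerivAt y)
      rw [hP, hqe, sub_self] at this
      exact this.deriv
    refine ⟨P + C (τ 0 - P.eval 0), ?_, fun x => ?_⟩
    · rw [← mem_degreeLT]
      refine add_mem (sum_mem fun i hi => ?_) ?_
      · rw [mem_degreeLT]
        refine (degree_monomial_le _ _).trans_lt ?_
        have := Finset.mem_range.1 hi
        exact_mod_cast Nat.succ_lt_succ this
      · rw [mem_degreeLT]
        exact degree_C_le.trans_lt (by exact_mod_cast n.succ_pos)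
    · simp only [eval_add, eval_C]
      linarith [hc x]

theorem Submodule.integral_mem_of_hasCompactSupport {E : Type*} [NormedAddCommGroup E]
    [NormedSpace ℝ E] [CompleteSpace E] (W : Submodule ℝ E) (hW : IsClosed (W : Set E))
    {F : ℝ → E} (hF : Continuous F) (hFc : HasCompactSupport F) (hFW : ∀ t, F t ∈ W) :
    ∫ t, F t ∈ W := by
  have : CompleteSpace W := hW.completeSpace_coe
  let F' : ℝ → W := fun t => ⟨F t, hFW t⟩
  have hF' : Continuous F' := hF.subtype_mk _
  have hc : HasCompactSupport F' := by
    refine hFc.mono fun t ht => ?_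
    simpa [F', Function.mem_support, Subtype.ext_iff] using ht
  have := W.subtypeL.integral_comp_comm (hF'.integrable_of_hasCompactSupport hc (μ := MeasureTheory.volume))
  have h2 : ∫ t, F t = W.subtypeL (∫ t, F' t) := this
  rw [h2]
  exact (∫ t, F' t).2

/-- If `τ` is smooth and all `τ ∘ (a • f + b)` lie in a closed subspace, then so do the derivatives
in `a`. -/
theorem pow_mul_iteratedDeriv_mem {K : Type*} [TopologicalSpace K] [CompactSpace K]
    (W : Submodule ℝ C(K, ℝ)) (hW : IsClosed (W : Set C(K, ℝ))) (f : C(K, ℝ))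
    {τ : ℝ → ℝ} (hτ : ContDiff ℝ (⊤ : ℕ∞) τ)
    (h : ∀ a b : ℝ, ∀ g : C(K, ℝ), (∀ x, g x = τ (a * f x + b)) → g ∈ W) (n : ℕ) :
    ∀ a b : ℝ, ∀ g : C(K, ℝ), (∀ x, g x = f x ^ n * iteratedDeriv n τ (a * f x + b)) → g ∈ W := by
  induction n with
  | zero => simpa using h
  | succ n ih =>
    intro a b g hg
    have hcont : Continuous (iteratedDeriv (n + 1) τ) :=
      hτ.continuous_iteratedDeriv (n + 1) (by exact_mod_cast le_top)
    have hder : ∀ y, HasDerivAt (iteratedDeriv n τ) (iteratedDeriv (n + 1) τ y) y := by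
      intro y
      rw [iteratedDeriv_succ]
      exact ((hτ.differentiable_iteratedDeriv n (by exact_mod_cast ENat.natCast_lt_top n)) y).hasDerivAt
    let D : ℝ → K → ℝ := fun s x =>
      ∫ u in (0 : ℝ)..1, f x ^ (n + 1) * iteratedDeriv (n + 1) τ ((a + u * s) * f x + b)
    have hDc : Continuous (Function.uncurry D) := by
      apply intervalIntegral.continuous_parametric_intervalIntegral_of_continuous'
      simp only [Function.uncurry_def]
      fun_prop
    let D' : ℝ → C(K, ℝ) := fun s => ⟨D s, hDc.comp (by fun_prop : Continuous fun x => (s, x))⟩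
    have hD' : Continuous D' := ContinuousMap.continuous_of_continuous_uncurry _ hDc
    have hmem : ∀ s ≠ 0, D' s ∈ W := by
      intro s hs
      let q : ℝ → C(K, ℝ) := fun a => ⟨fun x => f x ^ n * iteratedDeriv n τ (a * f x + b), by
        have := hτ.continuous_iteratedDeriv n (by exact_mod_cast le_top)
        fun_prop⟩
      have hq : ∀ a, q a ∈ W := fun a => ih a b _ fun x => rfl
      have : D' s = s⁻¹ • (q (a + s) - q a) := by
        ext x
        have hd : ∀ u ∈ Set.uIcc (0 : ℝ) 1, HasDerivAt
            (fun u => s⁻¹ * (f x ^ n * iteratedDeriv n τ ((a + u * s) * f x + b)))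
            (f x ^ (n + 1) * iteratedDeriv (n + 1) τ ((a + u * s) * f x + b)) u := by
          intro u _
          have h1 : HasDerivAt (fun u => (a + u * s) * f x + b) (s * f x) u := by
            simpa using ((((hasDerivAt_id u).mul_const s).const_add a).mul_const (f x)).add_const b
          have h2 := (((hder _).comp u h1).const_mul (f x ^ n)).const_mul s⁻¹
          refine h2.congr_deriv ?_
          field_simp
          ring
        have := intervalIntegral.integral_eq_sub_of_hasDerivAt hd
          (Continuous.intervalIntegrable (by fun_prop) _ _)
        change (∫ u in (0 : ℝ)..1, f x ^ (n + 1) * iteratedDeriv (n + 1) τ ((a + u * s) * f x + b))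
          = s⁻¹ * (f x ^ n * iteratedDeriv n τ ((a + s) * f x + b) -
            f x ^ n * iteratedDeriv n τ (a * f x + b))
        rw [this, one_mul, zero_mul, add_zero, mul_sub]
      rw [this]
      exact W.smul_mem _ (W.sub_mem (hq _) (hq _))
    have h0 : D' 0 ∈ W := by
      have := hW.preimage hD'
      have hd : Dense {s : ℝ | s ≠ 0} := dense_compl_singleton 0
      have hs : closure {s : ℝ | s ≠ 0} ⊆ D' ⁻¹' W := this.closure_subset_iff.2 hmem
      exact hs (hd 0)
    convert h0
    ext x
    simp [D', D, hg]

open MeasureTheory in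
theorem pow_mem_of_not_polynomial {K : Type*} [TopologicalSpace K] [CompactSpace K]
    (W : Submodule ℝ C(K, ℝ)) (hW : IsClosed (W : Set C(K, ℝ))) (f : C(K, ℝ))
    {σ : ℝ → ℝ} (hσ : Continuous σ) (hp : ¬ ∃ p : Polynomial ℝ, ∀ x : ℝ, σ x = Polynomial.eval x p)
    (h : ∀ a b : ℝ, (⟨fun x => σ (a * f x + b), by fun_prop⟩ : C(K, ℝ)) ∈ W) (n : ℕ) :
    f ^ n ∈ W := by
  by_contra hn
  apply hp
  let φ : ℕ → ContDiffBump (0 : ℝ) := fun m =>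
    ⟨1 / (m + 1 : ℝ) / 2, 1 / (m + 1 : ℝ), by positivity, half_lt_self (by positivity)⟩
  have hφ : Filter.Tendsto (fun m => (φ m).rOut) Filter.atTop (nhds 0) :=
    tendsto_one_div_add_atTop_nhds_zero_nat
  let τ : ℕ → ℝ → ℝ := fun m =>
    convolution ((φ m).normed volume) σ (ContinuousLinearMap.lsmul ℝ ℝ) volume
  have hlim : ∀ x, Filter.Tendsto (fun m => τ m x) Filter.atTop (nhds (σ x)) :=
    fun x => ContDiffBump.convolution_tendsto_right_of_continuous hφ hσ x
  have hsm : ∀ m, ContDiff ℝ (⊤ : ℕ∞) (τ m) := fun m =>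
    HasCompactSupport.contDiff_convolution_left _ (φ m).hasCompactSupport_normed
      (φ m).contDiff_normed hσ.locallyIntegrable
  have hmem : ∀ m, ∀ a b : ℝ, ∀ g : C(K, ℝ), (∀ x, g x = τ m (a * f x + b)) → g ∈ W := by
    intro m a b g hg
    let S : ℝ → C(K, ℝ) := fun t => ⟨fun x => σ (a * f x + (b - t)), by fun_prop⟩
    have hS : Continuous S := ContinuousMap.continuous_of_continuous_uncurry _ (by
      simp only [Function.uncurry_def, S, ContinuousMap.coe_mk]
      fun_prop)
    have hFc : Continuous fun t => (φ m).normed volume t • S t :=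
      (φ m).continuous_normed.smul hS
    have hFs : HasCompactSupport fun t => (φ m).normed volume t • S t :=
      (φ m).hasCompactSupport_normed.smul_right
    have key := W.integral_mem_of_hasCompactSupport hW hFc hFs
      fun t => W.smul_mem _ (h a (b - t))
    convert key
    ext x
    have := (ContinuousMap.evalCLM ℝ x).integral_comp_comm
      (hFc.integrable_of_hasCompactSupport hFs (μ := volume))
    rw [hg x]
    refine Eq.trans ?_ this
    simp only [τ, convolution_def]
    refine integral_congr_ae (Filter.Eventually.of_forall fun t => ?_)
    simp [S, add_sub_assoc]
  have hder : ∀ m b, iteratedDeriv n (τ m) b = 0 := by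
    intro m b
    by_contra hne
    apply hn
    have := pow_mul_iteratedDeriv_mem W hW f (hsm m) (hmem m) n 0 b
      (iteratedDeriv n (τ m) b • f ^ n) (fun x => by simp [mul_comm])
    exact (W.smul_mem_iff hne).1 this
  have hint : ∀ m x, τ m x = ∑ i ∈ Finset.range n,
      τ m i * (Lagrange.basis (Finset.range n) (fun i : ℕ => (i : ℝ)) i).eval x := by
    intro m x
    obtain ⟨p, hd, hpe⟩ := exists_polynomial_of_iteratedDeriv_eq_zero n (τ m) (hsm m) (hder m)
    have := Lagrange.eq_interpolate (s := Finset.range n) (v := fun i : ℕ => (i : ℝ)) (f := p)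
      (Nat.cast_injective.injOn) (by simpa using hd)
    rw [hpe x]
    conv_lhs => rw [this]
    simp [Lagrange.interpolate_apply, Polynomial.eval_finsetSum, hpe]
  refine ⟨∑ i ∈ Finset.range n, Polynomial.C (σ i) *
    Lagrange.basis (Finset.range n) (fun i : ℕ => (i : ℝ)) i, fun x => ?_⟩
  refine tendsto_nhds_unique (hlim x) ?_
  simp only [Polynomial.eval_finsetSum, Polynomial.eval_mul, Polynomial.eval_C]
  simp_rw [fun m => hint m x]
  exact tendsto_finsetSum _ fun i _ => (hlim i).mul_const _

/-- Functions `σ ∘ f`, with `f` in a point-separating space containing the constants, are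
total. -/
theorem closure_span_comp_eq_top {K : Type*} [TopologicalSpace K] [CompactSpace K]
    (S : Submodule ℝ C(K, ℝ)) (h1 : (1 : C(K, ℝ)) ∈ S)
    (hsep : ∀ x y : K, x ≠ y → ∃ f ∈ S, f x ≠ f y)
    (σ : C(ℝ, ℝ)) (hp : ¬ ∃ p : Polynomial ℝ, ∀ x : ℝ, σ x = Polynomial.eval x p) :
    (Submodule.span ℝ {g | ∃ f ∈ S, g = σ.comp f}).topologicalClosure = ⊤ := by
  set W := (Submodule.span ℝ {g | ∃ f ∈ S, g = σ.comp f}).topologicalClosure with hWdef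
  have hW : IsClosed (W : Set C(K, ℝ)) := Submodule.isClosed_topologicalClosure _
  have hσW : ∀ f ∈ S, σ.comp f ∈ W := fun f hf =>
    Submodule.le_topologicalClosure _ (Submodule.subset_span ⟨f, hf, rfl⟩)
  have hpow : ∀ f ∈ S, ∀ n, f ^ n ∈ W := by
    intro f hf n
    refine pow_mem_of_not_polynomial W hW f σ.continuous hp (fun a b => ?_) n
    convert hσW (a • f + b • 1) (S.add_mem (S.smul_mem _ hf) (S.smul_mem _ h1)) using 1
    ext x
    simp
  have hexp : ∀ f ∈ S, NormedSpace.exp f ∈ W := fun f hf =>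
    hW.mem_of_tendsto (NormedSpace.exp_series_hasSum_exp' (𝕂 := ℝ) f)
      (Filter.Eventually.of_forall fun s => W.sum_mem fun n _ => W.smul_mem _ (hpow f hf n))
  let Mn : Submonoid C(K, ℝ) :=
    { carrier := {g | ∃ f ∈ S, g = NormedSpace.exp f}
      one_mem' := ⟨0, S.zero_mem, NormedSpace.exp_zero.symm⟩
      mul_mem' := by
        rintro _ _ ⟨f, hf, rfl⟩ ⟨g, hg, rfl⟩
        exact ⟨f + g, S.add_mem hf hg, (NormedSpace.exp_add).symm⟩ }
  have happ : ∀ (f : C(K, ℝ)) x, (NormedSpace.exp f) x = Real.exp (f x) := by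
    intro f x
    have := NormedSpace.map_exp (ContinuousMap.evalAlgHom ℝ ℝ x)
      (ContinuousMap.evalCLM ℝ x).continuous f
    rw [Real.exp_eq_exp_ℝ]
    exact this
  have hle : Subalgebra.toSubmodule (Algebra.adjoin ℝ (Mn : Set C(K, ℝ))) ≤ W := by
    rw [Algebra.adjoin_eq_span, Submonoid.closure_eq, Submodule.span_le]
    rintro _ ⟨f, hf, rfl⟩
    exact hexp f hf
  have hdense := ContinuousMap.subalgebra_topologicalClosure_eq_top_of_separatesPoints
    (Algebra.adjoin ℝ (Mn : Set C(K, ℝ))) (by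
      intro x y hxy
      obtain ⟨f, hf, hne⟩ := hsep x y hxy
      refine ⟨_, ⟨NormedSpace.exp f, Algebra.subset_adjoin ⟨f, hf, rfl⟩, rfl⟩, ?_⟩
      simpa [happ] using hne)
  rw [eq_top_iff]
  intro g _
  have hg : g ∈ (Algebra.adjoin ℝ (Mn : Set C(K, ℝ))).topologicalClosure := by
    rw [hdense]; trivial
  exact closure_minimal hle hW hg

/-- Juxtaposition of two families of feature maps. -/
def stack {k l : ℕ} {Z : Type} (u : Fin k × Z → ℝ) (w : Fin l × Z → ℝ) : Fin (k + l) × Z → ℝ :=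
  fun p => Fin.append (fun i => u (i, p.2)) (fun i => w (i, p.2)) p.1

@[simp]
theorem stack_castAdd {k l : ℕ} {Z : Type} (u : Fin k × Z → ℝ) (w : Fin l × Z → ℝ) (i : Fin k)
    (z : Z) : stack u w (Fin.castAdd l i, z) = u (i, z) := by simp [stack]

@[simp]
theorem stack_natAdd {k l : ℕ} {Z : Type} (u : Fin k × Z → ℝ) (w : Fin l × Z → ℝ) (i : Fin l)
    (z : Z) : stack u w (Fin.natAdd k i, z) = w (i, z) := by simp [stack]

theorem act_stack (σ : ℝ → ℝ) {k l : ℕ} {Z : Type} (u : Fin k × Z → ℝ) (w : Fin l × Z → ℝ) :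
    act σ (stack u w) = stack (act σ u) (act σ w) := by
  ext ⟨i, z⟩
  refine Fin.addCases (fun i => ?_) (fun i => ?_) i <;> simp [act]

theorem stack_mem_layerPowIn {Y Z : Type} {M : Set ((Y → ℝ) → (Z → ℝ))} {h h' : ℕ}
    {F : (Y → ℝ) → (Fin h × Z → ℝ)} {F' : (Y → ℝ) → (Fin h' × Z → ℝ)}
    (hF : F ∈ layerPowIn M h) (hF' : F' ∈ layerPowIn M h') :
    (fun v => stack (F v) (F' v)) ∈ layerPowIn M (h + h') := by
  obtain ⟨f, hf, hFf⟩ := hF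
  obtain ⟨f', hf', hFf'⟩ := hF'
  refine ⟨Fin.append f f', fun i => ?_, fun v ⟨i, z⟩ => ?_⟩
  · refine Fin.addCases (fun i => ?_) (fun i => ?_) i <;> simp [hf, hf']
  · refine Fin.addCases (fun i => ?_) (fun i => ?_) i <;> simp [hFf, hFf']

theorem exists_layerPow_stack {Y Z : Type} {M : Set ((Y → ℝ) → (Z → ℝ))}
    (h0 : (fun _ => 0) ∈ M) {k k' h h' : ℕ}
    {F : (Fin k × Y → ℝ) → (Fin h × Z → ℝ)} {F' : (Fin k' × Y → ℝ) → (Fin h' × Z → ℝ)}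
    (hF : F ∈ layerPow M k h) (hF' : F' ∈ layerPow M k' h') :
    ∃ H ∈ layerPow M (k + k') (h + h'), ∀ u w, H (stack u w) = stack (F u) (F' w) := by
  obtain ⟨f, hf, hFf⟩ := hF
  obtain ⟨f', hf', hFf'⟩ := hF'
  let e : Fin (h + h') → Fin (k + k') → ((Y → ℝ) → (Z → ℝ)) :=
    Fin.append (fun i => Fin.append (f i) (fun _ _ => 0))
      (fun i => Fin.append (fun _ _ => 0) (f' i))
  refine ⟨fun v p => ∑ j, e p.1 j (fun y => v (j, y)) p.2,
    ⟨e, fun i j => ?_, fun v p => rfl⟩, fun u w => ?_⟩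
  · refine Fin.addCases (fun i => ?_) (fun i => ?_) i <;>
      refine Fin.addCases (fun j => ?_) (fun j => ?_) j <;> simp [e, hf, hf', h0]
  · ext ⟨i, z⟩
    refine Fin.addCases (fun i => ?_) (fun i => ?_) i <;>
      simp [e, Fin.sum_univ_add, hFf, hFf']

theorem exists_layerPowOut_stack {Y Z : Type} {M : Set ((Y → ℝ) → (Z → ℝ))} {k k' : ℕ}
    {F : (Fin k × Y → ℝ) → (Z → ℝ)} {F' : (Fin k' × Y → ℝ) → (Z → ℝ)}
    (hF : F ∈ layerPowOut M k) (hF' : F' ∈ layerPowOut M k') :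
    ∃ H ∈ layerPowOut M (k + k'), ∀ u w, H (stack u w) = F u + F' w := by
  obtain ⟨f, hf, hFf⟩ := hF
  obtain ⟨f', hf', hFf'⟩ := hF'
  refine ⟨fun v z => ∑ j, Fin.append f f' j (fun y => v (j, y)) z,
    ⟨Fin.append f f', fun j => ?_, fun v p => rfl⟩, fun u w => ?_⟩
  · refine Fin.addCases (fun i => ?_) (fun i => ?_) j <;> simp [hf, hf']
  · ext z
    simp [Fin.sum_univ_add, hFf, hFf']

theorem WPre_stack (σ : ℝ → ℝ) (d : ℕ) : ∀ (Y : Fin (d + 2) → Type)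
    (M : ∀ i : Fin (d + 1), Set ((Y i.castSucc → ℝ) → (Y i.succ → ℝ)))
    (_ : ∀ i, (fun _ => 0) ∈ M i) (k k' : ℕ)
    (g : (Y 0 → ℝ) → (Fin k × Y (Fin.last (d + 1)) → ℝ))
    (g' : (Y 0 → ℝ) → (Fin k' × Y (Fin.last (d + 1)) → ℝ))
    (_ : g ∈ WPre σ d Y M k) (_ : g' ∈ WPre σ d Y M k'),
    (fun v => stack (g v) (g' v)) ∈ WPre σ d Y M (k + k') := by
  induction d with
  | zero =>
    intro Y M _ k k' g g' hg hg'
    exact stack_mem_layerPowIn (M := M 0) hg hg'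
  | succ d ih =>
    rintro Y M h0 k k' _ _ ⟨l, g, hg, f, hf, rfl⟩ ⟨l', g', hg', f', hf', rfl⟩
    obtain ⟨H, hH, hHe⟩ := exists_layerPow_stack (h0 _) hf hf'
    refine ⟨l + l', _, ih (fun i => Y i.castSucc) (fun i => M i.castSucc) (fun i => h0 _) l l' g g'
      hg hg', H, hH, ?_⟩
    ext1 v
    exact ((congrArg H (act_stack σ (g v) (g' v))).trans (hHe _ _)).symm

theorem WPre_nonempty (σ : ℝ → ℝ) (d : ℕ) : ∀ (Y : Fin (d + 2) → Type)
    (M : ∀ i : Fin (d + 1), Set ((Y i.castSucc → ℝ) → (Y i.succ → ℝ)))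
    (_ : ∀ i, (fun _ => 0) ∈ M i) (k : ℕ), (WPre σ d Y M k).Nonempty := by
  induction d with
  | zero =>
    intro Y M h0 k
    exact ⟨fun _ _ => 0, fun _ _ => 0, fun _ => h0 0, fun _ _ => rfl⟩
  | succ d ih =>
    intro Y M h0 k
    obtain ⟨g, hg⟩ := ih (fun i => Y i.castSucc) (fun i => M i.castSucc) (fun i => h0 _) 0
    exact ⟨_, 0, g, hg, fun _ _ => 0, ⟨fun _ _ _ => 0, fun _ _ => h0 _, by simp⟩, rfl⟩

theorem continuous_act {σ : ℝ → ℝ} (hσ : Continuous σ) {Z : Type} :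
    Continuous (act σ : (Z → ℝ) → (Z → ℝ)) :=
  continuous_pi fun z => hσ.comp (continuous_apply z)

theorem continuous_of_mem_layerPowOut {Y Z : Type} {M : Set ((Y → ℝ) → (Z → ℝ))}
    (hM : ∀ f ∈ M, Continuous f) {k : ℕ} {F : (Fin k × Y → ℝ) → (Z → ℝ)}
    (hF : F ∈ layerPowOut M k) : Continuous F := by
  obtain ⟨f, hf, hFf⟩ := hF
  refine continuous_pi fun z => ?_
  simp_rw [hFf]
  exact continuous_finsetSum _ fun j _ => (continuous_apply z).comp
    ((hM _ (hf j)).comp (continuous_pi fun y => continuous_apply _))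

theorem continuous_of_mem_WPre {σ : ℝ → ℝ} (hσ : Continuous σ) (d : ℕ) :
    ∀ (Y : Fin (d + 2) → Type)
    (M : ∀ i : Fin (d + 1), Set ((Y i.castSucc → ℝ) → (Y i.succ → ℝ)))
    (_ : ∀ i, ∀ f ∈ M i, Continuous f) (k : ℕ), ∀ g ∈ WPre σ d Y M k, Continuous g := by
  induction d with
  | zero =>
    rintro Y M hM k g ⟨f, hf, hg⟩
    refine continuous_pi fun p => ?_
    simp_rw [hg]
    exact (continuous_apply p.2).comp (hM 0 _ (hf p.1))
  | succ d ih =>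
    rintro Y M hM k _ ⟨l, g, hg, f, ⟨e, he, hfe⟩, rfl⟩
    have hgc := ih (fun i => Y i.castSucc) (fun i => M i.castSucc) (fun i => hM _) l g hg
    have hfc : Continuous f := by
      refine continuous_pi fun p => ?_
      simp_rw [hfe]
      exact continuous_finsetSum _ fun j _ => (continuous_apply p.2).comp
        ((hM _ _ (he p.1 j)).comp (continuous_pi fun y => continuous_apply _))
    exact hfc.comp ((continuous_act hσ).comp hgc)

theorem IsLayerSpace.zero_mem {G : Type} [Group G] {Y Z : Type} [MulAction G Y] [MulAction G Z]
    {M : Set ((Y → ℝ) → (Z → ℝ))} (hM : IsLayerSpace G M) : (fun _ => 0) ∈ M := by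
  obtain ⟨k, φ, -, rfl⟩ := hM
  exact ⟨0, 0, by simp, by simp⟩

theorem IsLayerSpace.const_mem {G : Type} [Group G] {Y Z : Type} [MulAction G Y] [MulAction G Z]
    {M : Set ((Y → ℝ) → (Z → ℝ))} (hM : IsLayerSpace G M) (c : ℝ) : (fun _ _ => c) ∈ M := by
  obtain ⟨k, φ, -, rfl⟩ := hM
  exact ⟨0, fun _ => c, by simp, by simp⟩

theorem IsLayerSpace.smul_mem {G : Type} [Group G] {Y Z : Type} [MulAction G Y] [MulAction G Z]
    {M : Set ((Y → ℝ) → (Z → ℝ))} (hM : IsLayerSpace G M) (a : ℝ) {f : (Y → ℝ) → (Z → ℝ)}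
    (hf : f ∈ M) : (fun v => a • f v) ∈ M := by
  obtain ⟨k, φ, -, rfl⟩ := hM
  obtain ⟨c, b, hb, h⟩ := hf
  exact ⟨a • c, a • b, by simp [hb], by simp [h, Finset.smul_sum, smul_smul]⟩

theorem IsLayerSpace.continuous {G : Type} [Group G] {Y Z : Type} [Fintype Y] [MulAction G Y]
    [MulAction G Z] {M : Set ((Y → ℝ) → (Z → ℝ))} (hM : IsLayerSpace G M)
    {f : (Y → ℝ) → (Z → ℝ)} (hf : f ∈ M) : Continuous f := by
  obtain ⟨k, φ, -, rfl⟩ := hM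
  obtain ⟨c, b, -, h⟩ := hf
  rw [funext h]
  exact (continuous_finsetSum _ fun i _ =>
    (φ i).continuous_on_pi.const_smul (c i)).add continuous_const

theorem sepRel_unifClosure {A B : Type} [TopologicalSpace A] [MetricSpace B] (S : Set (A → B)) :
    sepRel (UnifClosure S) = sepRel S := by
  ext ⟨p, q⟩
  constructor
  · exact fun h f hf => h f fun K _ ε hε => ⟨f, hf, fun x _ => by simpa using hε⟩
  · intro h F hF
    refine eq_of_forall_dist_le fun ε hε => ?_
    obtain ⟨g, hg, hgd⟩ := hF {p, q} (Set.toFinite _).isCompact (ε / 2) (half_pos hε)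
    have h1 := hgd p (by simp)
    have h2 := hgd q (by simp)
    have h3 : g p = g q := h g hg
    rw [← h3] at h2
    linarith [dist_triangle_right (F p) (F q) (g p)]

theorem continuous_of_mem_unifClosure {A B : Type} [TopologicalSpace A]
    [WeaklyLocallyCompactSpace A] [PseudoMetricSpace B] {S : Set (A → B)}
    (hS : ∀ f ∈ S, Continuous f) {F : A → B} (hF : F ∈ UnifClosure S) : Continuous F := by
  refine continuous_iff_continuousAt.2 fun x => ?_
  obtain ⟨K, hK, hxK⟩ := exists_compact_mem_nhds x
  refine ContinuousOn.continuousAt ?_ hxK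
  refine continuousOn_of_uniform_approx_of_continuousOn fun u hu => ?_
  obtain ⟨ε, hε, hεu⟩ := Metric.mem_uniformity_dist.1 hu
  obtain ⟨g, hg, hgd⟩ := hF K hK ε hε
  exact ⟨g, (hS g hg).continuousOn, fun y hy => hεu (hgd y hy)⟩

/-- The networks whose closure is `UClassApp1`. -/
def networksApp1 (σ : ℝ → ℝ) (d : ℕ) (Y : Fin (d + 2) → Type)
    (M : ∀ i : Fin (d + 1), Set ((Y i.castSucc → ℝ) → (Y i.succ → ℝ))) {Z : Type}
    (N : Set ((Y (Fin.last (d + 1)) → ℝ) → (Z → ℝ))) : Set ((Y 0 → ℝ) → (Z → ℝ)) :=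
  { F | ∃ k, ∃ g ∈ WPre σ d Y M k, ∃ f ∈ layerPowOut N k, F = fun v => f (act σ (g v)) }

/-- The networks whose closure is `UClassApp2`. -/
def networksApp2 (σ : ℝ → ℝ) (d : ℕ) (Y : Fin (d + 2) → Type)
    (M : ∀ i : Fin (d + 1), Set ((Y i.castSucc → ℝ) → (Y i.succ → ℝ))) {Z₁ Z₂ : Type}
    (N₁ : Set ((Y (Fin.last (d + 1)) → ℝ) → (Z₁ → ℝ)))
    (N₂ : Set ((Z₁ → ℝ) → (Z₂ → ℝ))) : Set ((Y 0 → ℝ) → (Z₂ → ℝ)) :=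
  { F | ∃ k₁, ∃ g ∈ WPre σ d Y M k₁, ∃ k₂, ∃ m ∈ layerPow N₁ k₁ k₂,
      ∃ f ∈ layerPowOut N₂ k₂, F = fun v => f (act σ (m (act σ (g v)))) }

section Networks

variable {σ : ℝ → ℝ} {d : ℕ} {Y : Fin (d + 2) → Type}
  {M : ∀ i : Fin (d + 1), Set ((Y i.castSucc → ℝ) → (Y i.succ → ℝ))}

theorem networksApp1_add {Z : Type} {N : Set ((Y (Fin.last (d + 1)) → ℝ) → (Z → ℝ))}
    (h0 : ∀ i, (fun _ => 0) ∈ M i) {F F' : (Y 0 → ℝ) → (Z → ℝ)}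
    (hF : F ∈ networksApp1 σ d Y M N) (hF' : F' ∈ networksApp1 σ d Y M N) :
    F + F' ∈ networksApp1 σ d Y M N := by
  obtain ⟨k, g, hg, f, hf, rfl⟩ := hF
  obtain ⟨k', g', hg', f', hf', rfl⟩ := hF'
  obtain ⟨H, hH, hHe⟩ := exists_layerPowOut_stack hf hf'
  refine ⟨k + k', _, WPre_stack σ d Y M h0 k k' g g' hg hg', H, hH, ?_⟩
  ext1 v
  rw [act_stack, hHe]
  rfl

theorem layerPowOut_smul {A Z : Type} {N : Set ((A → ℝ) → (Z → ℝ))} (a : ℝ)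
    (hN : ∀ f ∈ N, (fun v => a • f v) ∈ N) {k : ℕ} {f : (Fin k × A → ℝ) → (Z → ℝ)}
    (hf : f ∈ layerPowOut N k) : (fun v => a • f v) ∈ layerPowOut N k := by
  obtain ⟨e, he, hfe⟩ := hf
  exact ⟨fun j v => a • e j v, fun j => hN _ (he j), fun v z => by simp [hfe, Finset.mul_sum]⟩

theorem networksApp1_smul {Z : Type} {N : Set ((Y (Fin.last (d + 1)) → ℝ) → (Z → ℝ))} (a : ℝ)
    (hN : ∀ f ∈ N, (fun v => a • f v) ∈ N) {F : (Y 0 → ℝ) → (Z → ℝ)}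
    (hF : F ∈ networksApp1 σ d Y M N) : a • F ∈ networksApp1 σ d Y M N := by
  obtain ⟨k, g, hg, f, hf, rfl⟩ := hF
  exact ⟨k, g, hg, _, layerPowOut_smul a hN hf, rfl⟩

theorem networksApp1_const {Z : Type} {N : Set ((Y (Fin.last (d + 1)) → ℝ) → (Z → ℝ))}
    (h0 : ∀ i, (fun _ => 0) ∈ M i) (c : ℝ) (hN : (fun _ _ => c) ∈ N) :
    (fun _ _ => c) ∈ networksApp1 σ d Y M N := by
  obtain ⟨g, hg⟩ := WPre_nonempty σ d Y M h0 1
  exact ⟨1, g, hg, fun _ _ => c, ⟨fun _ _ _ => c, fun _ => hN, by simp⟩, rfl⟩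

theorem continuous_of_mem_networksApp1 {Z : Type}
    {N : Set ((Y (Fin.last (d + 1)) → ℝ) → (Z → ℝ))} (hσ : Continuous σ)
    (hM : ∀ i, ∀ f ∈ M i, Continuous f) (hN : ∀ f ∈ N, Continuous f)
    {F : (Y 0 → ℝ) → (Z → ℝ)} (hF : F ∈ networksApp1 σ d Y M N) : Continuous F := by
  obtain ⟨k, g, hg, f, hf, rfl⟩ := hF
  exact (continuous_of_mem_layerPowOut hN hf).comp
    ((continuous_act hσ).comp (continuous_of_mem_WPre hσ d Y M hM k g hg))

variable {N : Set ((Y (Fin.last (d + 1)) → ℝ) → (Unit → ℝ))}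

theorem networksApp2_add (h0 : ∀ i, (fun _ => 0) ∈ M i) (hN : (fun _ => 0) ∈ N)
    {F F' : (Y 0 → ℝ) → (Unit → ℝ)}
    (hF : F ∈ networksApp2 σ d Y M N Lfull) (hF' : F' ∈ networksApp2 σ d Y M N Lfull) :
    F + F' ∈ networksApp2 σ d Y M N Lfull := by
  obtain ⟨k, g, hg, l, m, hm, f, hf, rfl⟩ := hF
  obtain ⟨k', g', hg', l', m', hm', f', hf', rfl⟩ := hF'
  obtain ⟨H, hH, hHe⟩ := exists_layerPowOut_stack hf hf'
  obtain ⟨m'', hm'', hme⟩ := exists_layerPow_stack hN hm hm'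
  refine ⟨k + k', _, WPre_stack σ d Y M h0 k k' g g' hg hg', l + l', m'', hm'', H, hH, ?_⟩
  ext1 v
  rw [act_stack, hme, act_stack, hHe]
  rfl

theorem networksApp2_smul (a : ℝ) {F : (Y 0 → ℝ) → (Unit → ℝ)}
    (hF : F ∈ networksApp2 σ d Y M N Lfull) : a • F ∈ networksApp2 σ d Y M N Lfull := by
  obtain ⟨k, g, hg, l, m, hm, f, hf, rfl⟩ := hF
  refine ⟨k, g, hg, l, m, hm, _, layerPowOut_smul a ?_ hf, rfl⟩
  rintro _ ⟨b, c, rfl⟩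
  refine ⟨a * b, a * c, ?_⟩
  ext v u
  simp only [Pi.smul_apply, smul_eq_mul]
  ring

theorem act_comp_mem_networksApp2 {f : (Y 0 → ℝ) → (Unit → ℝ)}
    (hf : f ∈ networksApp1 σ d Y M N) :
    (fun v => act σ (f v)) ∈ networksApp2 σ d Y M N Lfull := by
  obtain ⟨k, g, hg, f, ⟨e, he, hfe⟩, rfl⟩ := hf
  refine ⟨k, g, hg, 1, fun v p => f v p.2, ⟨fun _ => e, fun _ => he, fun v p => hfe v p.2⟩,
    fun v u => v (0, u), ⟨fun _ v u => v u, fun _ => ⟨1, 0, by ext; simp⟩, by simp⟩, rfl⟩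

/-- A network with a fully connected readout is a linear combination of activated networks,
plus a constant. -/
theorem exists_eq_sum_of_mem_networksApp2 {F : (Y 0 → ℝ) → (Unit → ℝ)}
    (hF : F ∈ networksApp2 σ d Y M N Lfull) :
    ∃ (k : ℕ) (f : Fin k → (Y 0 → ℝ) → (Unit → ℝ)) (a b : Fin k → ℝ),
      (∀ j, f j ∈ networksApp1 σ d Y M N) ∧
      ∀ v, F v = fun _ => ∑ j, (a j * σ (f j v ()) + b j) := by
  obtain ⟨k, g, hg, l, m, ⟨e, he, hme⟩, f, ⟨c, hc, hfc⟩, rfl⟩ := hF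
  choose a b hab using hc
  refine ⟨l, fun j v u => m (act σ (g v)) (j, u), a, b, fun j => ?_, fun v => ?_⟩
  · exact ⟨k, g, hg, fun v u => m v (j, u), ⟨e j, he j, fun v u => hme v (j, u)⟩, rfl⟩
  · ext u
    simp [hfc, hab, act]

theorem unifClosure_networksApp2_eq_Crho (h0 : ∀ i, (fun _ => 0) ∈ M i)
    (hMc : ∀ i, ∀ f ∈ M i, Continuous f) [Fintype (Y 0)] (hNc : ∀ f ∈ N, Continuous f)
    (hNconst : ∀ c : ℝ, (fun _ _ => c) ∈ N) (hNsmul : ∀ a : ℝ, ∀ f ∈ N, (fun v => a • f v) ∈ N)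
    (hσc : Continuous σ) (hσp : NotPolynomial σ) :
    UnifClosure (networksApp2 σ d Y M N Lfull) = Crho (sepRel (networksApp1 σ d Y M N)) := by
  have hN0 : (fun _ => 0) ∈ N := hNconst 0
  have h1c : ∀ f ∈ networksApp1 σ d Y M N, Continuous f :=
    fun f hf => continuous_of_mem_networksApp1 hσc hMc hNc hf
  apply Set.Subset.antisymm
  · intro F hF
    refine ⟨continuous_of_mem_unifClosure (fun F hF => ?_) hF, fun p hp => ?_⟩
    · obtain ⟨k, f, a, b, hf, hFe⟩ := exists_eq_sum_of_mem_networksApp2 hF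
      rw [funext hFe]
      refine continuous_pi fun _ => continuous_finsetSum _ fun j _ => ?_
      have := (continuous_apply ()).comp (h1c _ (hf j))
      exact ((hσc.comp this).const_mul _).add continuous_const
    · have : p ∈ sepRel (networksApp2 σ d Y M N Lfull) := by
        intro F hF
        obtain ⟨k, f, a, b, hf, hFe⟩ := exists_eq_sum_of_mem_networksApp2 hF
        simp only [hFe, fun j => hp _ (hf j)]
      rw [← sepRel_unifClosure] at this
      exact this F hF
  · rintro F ⟨hFc, hFρ⟩ K hK ε hε
    have : CompactSpace K := isCompact_iff_compactSpace.1 hK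
    let ev : K → (networksApp1 σ d Y M N → ℝ) := fun v f => f.1 v ()
    have hev : Continuous ev := continuous_pi fun f =>
      (continuous_apply ()).comp ((h1c _ f.2).comp continuous_subtype_val)
    let Q := Set.range ev
    have : CompactSpace Q := isCompact_iff_compactSpace.1 (isCompact_range hev)
    let π : C(K, Q) := ⟨Set.rangeFactorization ev, hev.subtype_mk _⟩
    have hπ : Topology.IsQuotientMap π :=
      π.continuous.isClosedMap.isQuotientMap π.continuous Set.rangeFactorization_surjective
    let FK : C(K, ℝ) := ⟨fun v => F v (), (continuous_apply ()).comp
      (hFc.comp continuous_subtype_val)⟩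
    have hfac : Function.FactorsThrough FK π := by
      intro v w hvw
      have : F v = F w := hFρ (v, w) fun f hf => by
        have := congrFun (congrArg Subtype.val hvw) ⟨f, hf⟩
        exact funext fun _ => this
      exact congrFun this ()
    let S : Submodule ℝ C(Q, ℝ) :=
      { carrier := {c | ∃ f ∈ networksApp1 σ d Y M N, ∀ v : K, c (π v) = f v ()}
        zero_mem' := ⟨_, networksApp1_const h0 0 (hNconst 0), fun _ => rfl⟩
        add_mem' := by
          rintro c c' ⟨f, hf, hcf⟩ ⟨f', hf', hcf'⟩
          exact ⟨_, networksApp1_add h0 hf hf', fun v => by simp [hcf, hcf']⟩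
        smul_mem' := by
          rintro a c ⟨f, hf, hcf⟩
          exact ⟨_, networksApp1_smul a (hNsmul a) hf, fun v => by simp [hcf]⟩ }
    have hdense := closure_span_comp_eq_top S
      ⟨_, networksApp1_const h0 1 (hNconst 1), fun _ => rfl⟩ (fun p q hpq => by
        obtain ⟨f, hf⟩ := Function.ne_iff.1 (Subtype.coe_ne_coe.2 hpq)
        exact ⟨⟨fun r => r.1 f, (continuous_apply f).comp continuous_subtype_val⟩,
          ⟨f, f.2, fun _ => rfl⟩, hf⟩) ⟨σ, hσc⟩ hσp
    have hmem : hπ.lift FK hfac ∈ closure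
        (Submodule.span ℝ {g | ∃ f ∈ S, g = (⟨σ, hσc⟩ : C(ℝ, ℝ)).comp f} : Set C(Q, ℝ)) := by
      rw [← Submodule.topologicalClosure_coe, hdense]
      trivial
    obtain ⟨s, hs, hsd⟩ := Metric.mem_closure_iff.1 hmem ε hε
    have hnet : ∃ H ∈ networksApp2 σ d Y M N Lfull, ∀ v : K, s (π v) = H v () := by
      clear hsd
      induction hs using Submodule.span_induction with
      | mem c hc =>
        obtain ⟨c, ⟨f, hf, hcf⟩, rfl⟩ := hc
        exact ⟨_, act_comp_mem_networksApp2 hf, fun v => by simp [act, hcf]⟩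
      | zero =>
        exact ⟨_, networksApp2_smul 0 (act_comp_mem_networksApp2
          (networksApp1_const h0 0 (hNconst 0))), fun v => by simp⟩
      | add c c' _ _ hc hc' =>
        obtain ⟨H, hH, hcH⟩ := hc
        obtain ⟨H', hH', hcH'⟩ := hc'
        exact ⟨_, networksApp2_add h0 hN0 hH hH', fun v => by simp [hcH, hcH']⟩
      | smul a c _ hc =>
        obtain ⟨H, hH, hcH⟩ := hc
        exact ⟨_, networksApp2_smul a hH, fun v => by simp [hcH]⟩
    obtain ⟨H, hH, hsH⟩ := hnet
    refine ⟨H, hH, fun v hv => ?_⟩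
    rw [dist_pi_lt_iff hε]
    intro _
    have h1 := (ContinuousMap.dist_apply_le_dist (π ⟨v, hv⟩)).trans_lt hsd
    rw [hsH] at h1
    have h2 : hπ.lift FK hfac (π ⟨v, hv⟩) = F v () :=
      congrArg (fun c : C(K, ℝ) => c ⟨v, hv⟩) (hπ.lift_comp FK hfac)
    rw [h2] at h1
    exact h1

end Networks

/-- Lemma `lemma:pseudo-inv-univ`: for a chain of layer spaces
`M₀, …, M_d` (last representation `ℝ^X`, `X := Y (Fin.last (d+1))`), a layer space
`M ⊆ Aff_G(ℝ^X, ℝ^X)` containing the identity, the pushforward layer space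
`P = π_{x*} M = { π_x ∘ m : m ∈ M } ⊆ Aff_{G_x}(ℝ^X, ℝ)` and the fully connected readout
`L = Aff(ℝ, ℝ)`, with `σ` continuous and not a polynomial, setting
`ρ = ρ(U(M₀, …, M_d, P))`, we have `U(M₀, …, M_d, P, L) = C_ρ(V₀, ℝ)`. -/
theorem pushforward_readout_separation_constrained_universality
    {G : Type} [Group G] [Fintype G]
    {d : ℕ} {Y : Fin (d + 2) → Type} [∀ i, Fintype (Y i)] [∀ i, MulAction G (Y i)]
    (M : ∀ i : Fin (d + 1), Set ((Y i.castSucc → ℝ) → (Y i.succ → ℝ)))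
    (hM : ∀ i, IsLayerSpace G (M i))
    (x : Y (Fin.last (d + 1)))
    (Mlast : Set ((Y (Fin.last (d + 1)) → ℝ) → (Y (Fin.last (d + 1)) → ℝ)))
    (hMlast : IsLayerSpace G Mlast) (hid : (fun v => v) ∈ Mlast)
    (σ : ℝ → ℝ) (hσc : Continuous σ) (hσp : NotPolynomial σ) :
    UClassApp2 σ d Y M
        ((fun (m : (Y (Fin.last (d + 1)) → ℝ) → (Y (Fin.last (d + 1)) → ℝ)) =>
            fun v (_ : Unit) => m v x) '' Mlast) Lfull
      = Crho (sepRel (UClassApp1 σ d Y M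
          ((fun (m : (Y (Fin.last (d + 1)) → ℝ) → (Y (Fin.last (d + 1)) → ℝ)) =>
              fun v (_ : Unit) => m v x) '' Mlast))) := by
  rw [UClassApp1, sepRel_unifClosure]
  refine unifClosure_networksApp2_eq_Crho (fun i => (hM i).zero_mem)
    (fun i f hf => (hM i).continuous hf) ?_ (fun c => ⟨_, hMlast.const_mem c, rfl⟩) ?_ hσc hσp
  · rintro _ ⟨m, hm, rfl⟩
    exact continuous_pi fun _ => (continuous_apply x).comp (hMlast.continuous hm)
  · rintro a _ ⟨m, hm, rfl⟩
    exact ⟨_, hMlast.smul_mem a hm, rfl⟩
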